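/- There is an absolute constant C such that the following holds. Let l ∈ ℝ² with |l| = 1, λ > 0 with λl ∈ ℤ², μ > 0 with μ ≤ λ/2, and let b₀ : 𝕋² → ℝ be smooth with Fourier support contained in {|k| ≤ μ}. Then there exist kernels K₁, ..., K₆ ∈ L¹(ℝ² × ℝ²) with ‖K_i‖_{L¹(ℝ⁴)} ≤ C, such that, denoting m_i the Fourier transform of K_i and T_{m_i}(·,·) the associated bilinear multiplier: b₀ · (T^{(2)}_{λl} b₀) = (μ²/λ²) ∑_{i=1}^{2} ∂_{x_i} T_{m_i}(b₀, b₀); (T^{(1)}_{λl} b₀) · ∂_{x₁} b₀ = (μ²/λ) ∑_{i=1}^{2} ∂_{x_i} T_{m_{i+2}}(b₀, b₀); and (T^{(1)}_{λl} b₀) · ∂_{x₂} b₀ = (μ²/λ) ∑_{i=1}^{2} ∂_{x_i} T_{m_{i+4}}(b₀, b₀). -/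

import Mathlib

open MeasureTheory Complex Filter
open scoped ENNReal NNReal

noncomputable section

abbrev Z2 := ℤ × ℤ

/-- dot product of an integer frequency with a point of `ℝ²` -/
def dotZ (k : Z2) (x : ℝ × ℝ) : ℝ := (k.1 : ℝ) * x.1 + (k.2 : ℝ) * x.2

/-- Euclidean norm of an integer frequency -/
def knorm (k : Z2) : ℝ := Real.sqrt ((k.1 : ℝ) ^ 2 + (k.2 : ℝ) ^ 2)

/-- Euclidean norm on `ℝ²` (realized as `ℝ × ℝ`) -/
def e2 (x : ℝ × ℝ) : ℝ := Real.sqrt (x.1 ^ 2 + x.2 ^ 2)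

/-- the fundamental domain `[-π, π]²` of the torus -/
def Q2 : Set (ℝ × ℝ) := Set.Icc (-Real.pi, -Real.pi) (Real.pi, Real.pi)

/-- `2π`-periodicity in both variables -/
def Periodic2 (f : ℝ × ℝ → ℂ) : Prop :=
  ∀ x : ℝ × ℝ, f (x.1 + 2 * Real.pi, x.2) = f x ∧ f (x.1, x.2 + 2 * Real.pi) = f x

def RealValued (f : ℝ × ℝ → ℂ) : Prop := ∀ x, (f x).im = 0

/-- Fourier coefficient `f̂(k) = (2π)⁻² ∫_{𝕋²} f(x) e^{-ik⋅x} dx` -/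
def fCoeff (f : ℝ × ℝ → ℂ) (k : Z2) : ℂ :=
  (1 / (2 * Real.pi) ^ 2 : ℂ) * ∫ x in Q2, f x * Complex.exp (-Complex.I * (dotZ k x : ℝ))

/-- Fourier multiplier operator with symbol `m` -/
def Tmult (m : Z2 → ℂ) (f : ℝ × ℝ → ℂ) : ℝ × ℝ → ℂ :=
  fun x => ∑' k : Z2, m k * fCoeff f k * Complex.exp (Complex.I * (dotZ k x : ℝ))

/-- `Λ^s = (-Δ)^{s/2}`, the multiplier with symbol `|k|^s` (killing `k = 0` for `s ≤ 0`) -/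
def Lam (s : ℝ) : (ℝ × ℝ → ℂ) → (ℝ × ℝ → ℂ) :=
  Tmult fun k => if k = 0 then 0 else ((knorm k ^ s : ℝ) : ℂ)

/-- symbol of the Riesz transform `R_j`, `i k_j / |k|` -/
def rieszSym (j : Fin 2) (k : Z2) : ℂ :=
  if k = 0 then 0
  else Complex.I * ((if j = 0 then (k.1 : ℝ) else (k.2 : ℝ)) : ℂ) / ((knorm k : ℝ) : ℂ)

/-- the Riesz transform `R_j` -/
def Riesz (j : Fin 2) : (ℝ × ℝ → ℂ) → (ℝ × ℝ → ℂ) := Tmult (rieszSym j)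

/-- symbol of the modified Riesz-type transforms `R_j^o` of Lemma 2.2 -/
def RoSym (j : Fin 2) (k : Z2) : ℝ :=
  if k = 0 then 0
  else if j = 0 then 25 * ((k.2 : ℝ) ^ 2 - (k.1 : ℝ) ^ 2) / (12 * ((k.1 : ℝ) ^ 2 + (k.2 : ℝ) ^ 2))
  else 7 * ((k.2 : ℝ) ^ 2 - (k.1 : ℝ) ^ 2) / (12 * ((k.1 : ℝ) ^ 2 + (k.2 : ℝ) ^ 2))
      + 4 * (k.1 : ℝ) * (k.2 : ℝ) / ((k.1 : ℝ) ^ 2 + (k.2 : ℝ) ^ 2)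

/-- the Riesz-type transforms `R_j^o` -/
def Ro (j : Fin 2) : (ℝ × ℝ → ℂ) → (ℝ × ℝ → ℂ) := Tmult fun k => ((RoSym j k : ℝ) : ℂ)

/-- symbol of `Δ⁻¹` (mean annihilated) -/
def deltaInvSym (k : Z2) : ℂ := if k = 0 then 0 else -1 / ((knorm k ^ 2 : ℝ) : ℂ)

/-- directional derivative `(v ⋅ ∇) f` -/
def dirD (v : ℝ × ℝ) (f : ℝ × ℝ → ℂ) : ℝ × ℝ → ℂ := fun x => fderiv ℝ f x v

/-- partial derivative `∂_j f` -/
def pd (j : Fin 2) (f : ℝ × ℝ → ℂ) : ℝ × ℝ → ℂ :=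
  dirD (if j = 0 then ((1 : ℝ), (0 : ℝ)) else ((0 : ℝ), (1 : ℝ))) f

/-- sup norm on the torus -/
def supNorm (f : ℝ × ℝ → ℂ) : ℝ := ⨆ x : ℝ × ℝ, ‖f x‖

/-- the `X`-norm `‖q‖_X = ‖q‖_∞ + ‖R₁^o q‖_∞ + ‖R₂^o q‖_∞` -/
def Xnorm (q : ℝ × ℝ → ℂ) : ℝ := supNorm q + supNorm (Ro 0 q) + supNorm (Ro 1 q)

/-- the vectors `l₁ = (3/5, 4/5)` and `l₂ = (1,0)` -/
def l1 : ℝ × ℝ := (3 / 5, 4 / 5)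
def l2 : ℝ × ℝ := (1, 0)

/-- the rotation `l ↦ l^⊥` -/
def perp (l : ℝ × ℝ) : ℝ × ℝ := (-l.2, l.1)

/-- symbol view of frequencies as real vectors -/
def toR (k : Z2) : ℝ × ℝ := ((k.1 : ℝ), (k.2 : ℝ))

/-- the operator `T^{(1)}_{λl}` (where `κ = λl ∈ ℤ²`) -/
def T1op (κ : Z2) (lam : ℝ) : (ℝ × ℝ → ℂ) → (ℝ × ℝ → ℂ) :=
  Tmult fun k => (((knorm (κ + k) + knorm (κ - k)) / 2 - lam : ℝ) : ℂ)

/-- the operator `T^{(2)}_{λl}` (where `κ = λl ∈ ℤ²`) -/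
def T2op (κ : Z2) (l : ℝ × ℝ) : (ℝ × ℝ → ℂ) → (ℝ × ℝ → ℂ) :=
  Tmult fun k =>
    Complex.I * (((knorm (κ + k) - knorm (κ - k)) / 2 - (l.1 * (k.1 : ℝ) + l.2 * (k.2 : ℝ)) : ℝ) : ℂ)

/-- the functions `a_j = 2 √(r/den) √(C₀ + R_j^o q / r)` -/
def aPerf (q : ℝ × ℝ → ℂ) (r den C₀ : ℝ) (j : Fin 2) : ℝ × ℝ → ℂ :=
  fun x => ((2 * Real.sqrt (r / den) * Real.sqrt (C₀ + (Ro j q x).re / r) : ℝ) : ℂ)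

/-- `λ_n = ⌈λ₀^{bⁿ}⌉` -/
def lamSeq (lam0 : ℕ) (b : ℝ) (n : ℕ) : ℕ := ⌈((lam0 : ℝ)) ^ (b ^ n)⌉₊

/-- `r_n = λ_n^{-β}` -/
def rSeq (lam0 : ℕ) (b β : ℝ) (n : ℕ) : ℝ := ((lamSeq lam0 b n : ℝ)) ^ (-β)

/-- `μ_{n+1} = (λ_n λ_{n+1})^{1/2}` -/
def muSeq (lam0 : ℕ) (b : ℝ) (n : ℕ) : ℝ :=
  Real.sqrt ((lamSeq lam0 b n : ℝ) * (lamSeq lam0 b (n + 1) : ℝ))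

/-- smooth Fourier cutoff `P_{≤μ}` associated to a bump `ψ` -/
def Pcut (ψ : ℝ × ℝ → ℝ) (μ : ℝ) : (ℝ × ℝ → ℂ) → (ℝ × ℝ → ℂ) :=
  Tmult fun k => ((ψ ((k.1 : ℝ) / μ, (k.2 : ℝ) / μ) : ℝ) : ℂ)

/-- bilinear multiplier with symbol the Fourier transform of a kernel `K ∈ L¹(ℝ²×ℝ²)` -/
def mOf (K : (ℝ × ℝ) × (ℝ × ℝ) → ℂ) (ξ η : ℝ × ℝ) : ℂ :=
  ∫ z : (ℝ × ℝ) × (ℝ × ℝ),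
    K z * Complex.exp (-Complex.I * ((ξ.1 * z.1.1 + ξ.2 * z.1.2 + η.1 * z.2.1 + η.2 * z.2.2 : ℝ) : ℂ))

/-- the bilinear multiplier operator associated to a kernel `K ∈ L¹(ℝ²×ℝ²)` -/
def Tbil (K : (ℝ × ℝ) × (ℝ × ℝ) → ℂ) (f g : ℝ × ℝ → ℂ) : ℝ × ℝ → ℂ :=
  fun x => ∑' k : Z2,
    (∑' k' : Z2, mOf K (toR k') (toR (k - k')) * fCoeff f k' * fCoeff g (k - k'))
      * Complex.exp (Complex.I * (dotZ k x : ℝ))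

/-- Fourier coefficients of the commutator `[R_j, φ]θ`, computed from those of `φ` and `θ` -/
def commCoeff (j : Fin 2) (φh c : Z2 → ℂ) (k : Z2) : ℂ :=
  ∑' k' : Z2, (rieszSym j k - rieszSym j k') * φh (k - k') * c k'

/-!
Rescale frequencies by `μ` and put `ε = μ / λ`. The symbols of `T^{(1)}` and `T^{(2)}` become `ε²`
times an even function and `ε³` times an odd function of the frequency, up to powers of `λ` and
factors `i`, and both functions are smooth in `(l, ε, ξ)` down to `ε = 0`. Only the symmetrization
of a bilinear symbol acts on the pair `(b₀, b₀)`, and by parity the symmetrized symbols of the three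
products vanish on the antidiagonal `ξ + η = 0`. Hence they factor through `ξ + η`, which is the
symbol of a divergence. The cofactors are smooth, and `(l, ε)` ranges over a compact set, so after
a frequency cutoff they are Fourier transforms of kernels bounded in `L¹`; dilation by `μ` does not
change the `L¹` norm.
-/

section SmoothFunctions

open scoped Topology Manifold

variable {E F : Type*} [NormedAddCommGroup E] [NormedSpace ℝ E]
  [NormedAddCommGroup F] [NormedSpace ℝ F]

theorem exists_contDiff_eqOn_of_contDiffOn [FiniteDimensional ℝ E] {f : E → F} {s U : Set E}
    (hU : IsOpen U) (hs : IsClosed s) (hsU : s ⊆ U) (hf : ContDiffOn ℝ (⊤ : ℕ∞) f U) :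
    ∃ g : E → F, ContDiff ℝ (⊤ : ℕ∞) g ∧ Set.EqOn g f s := by
  obtain ⟨V, hVo, hsV, hVU⟩ := normal_exists_closure_subset hs hU hsU
  obtain ⟨χ, hχs, hχV, -⟩ := exists_contMDiffMap_one_nhds_of_subset_interior (n := (⊤ : ℕ∞))
    𝓘(ℝ, E) hs (hsV.trans_eq hVo.interior_eq.symm)
  have hχ : ContDiff ℝ (⊤ : ℕ∞) χ := χ.contMDiff.contDiff
  refine ⟨fun x => χ x • f x, contDiff_iff_contDiffAt.2 fun x => ?_, fun x hx => ?_⟩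
  · by_cases hx : x ∈ closure V
    · exact hχ.contDiffAt.smul (hf.contDiffAt (hU.mem_nhds (hVU hx)))
    · refine contDiffAt_const (c := 0) |>.congr_of_eventuallyEq ?_
      filter_upwards [isClosed_closure.isOpen_compl.mem_nhds hx] with y hy
      rw [hχV y fun hyV => hy (subset_closure hyV), zero_smul]
  · simp only [hχs.self_of_nhdsSet x hx, one_smul]

-- Up to a cutoff in `t`, the integral is a convolution over `t` with the indicator of `(0, 1]`.
theorem contDiff_integral_zero_one [CompleteSpace F] {f : E → ℝ → F} {n : ℕ∞}
    (hf : ContDiff ℝ n ↿f) : ContDiff ℝ n fun x => ∫ t in (0 : ℝ)..1, f x t := by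
  let χ : ContDiffBump (0 : ℝ) := ⟨1, 2, one_pos, one_lt_two⟩
  let g : E → ℝ → F := fun x t => χ t • f x (-t)
  have hg : ContDiff ℝ n ↿g :=
    (χ.contDiff.comp contDiff_snd).smul (hf.comp (contDiff_fst.prodMk contDiff_snd.neg))
  have hg_zero : ∀ x t, x ∈ Set.univ → t ∉ Metric.closedBall (0 : ℝ) 2 → g x t = 0 :=
    fun x t _ ht => by simp only [g, χ.zero_of_le_dist (not_le.1 ht).le, zero_smul]
  have hind : Integrable (Set.indicator (Set.Ioc (0 : ℝ) 1) fun _ => (1 : ℝ)) :=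
    (integrable_indicator_iff measurableSet_Ioc).2 (integrableOn_const (by simp))
  have hconv := contDiffOn_convolution_right_with_param (ContinuousLinearMap.lsmul ℝ ℝ)
    isOpen_univ (isCompact_closedBall _ _) hg_zero hind.locallyIntegrable hg.contDiffOn
  rw [Set.univ_prod_univ, contDiffOn_univ] at hconv
  convert hconv.comp (contDiff_id.prodMk (contDiff_const (c := (0 : ℝ)))) using 2 with x
  have hχ : ∀ t ∈ Set.Ioc (0 : ℝ) 1, χ (-t) = 1 := fun t ht =>
    χ.one_of_mem_closedBall <| by simpa [abs_of_pos ht.1] using ht.2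
  rw [intervalIntegral.integral_of_le zero_le_one, ← integral_indicator measurableSet_Ioc]
  refine integral_congr_ae (.of_forall fun t => ?_)
  by_cases ht : t ∈ Set.Ioc (0 : ℝ) 1 <;> simp [g, ht, hχ t]

theorem exists_contDiff_dividedDifference {Θ : Type*} [NormedAddCommGroup Θ] [NormedSpace ℝ Θ]
    [CompleteSpace F] {f : Θ × E → F} (hf : ContDiff ℝ (⊤ : ℕ∞) f) :
    ∃ D : Θ × (E × E) → E →L[ℝ] F, ContDiff ℝ (⊤ : ℕ∞) D ∧
      ∀ θ p q, f (θ, p) - f (θ, q) = D (θ, (p, q)) (p - q) := by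
  let path : Θ × (E × E) → ℝ → Θ × E := fun w t => (w.1, w.2.2 + t • (w.2.1 - w.2.2))
  have hpath : ContDiff ℝ (⊤ : ℕ∞) ↿path := by
    change ContDiff ℝ _ fun v : (Θ × (E × E)) × ℝ =>
      (v.1.1, v.1.2.2 + v.2 • (v.1.2.1 - v.1.2.2))
    fun_prop
  let D₀ : Θ × (E × E) → ℝ → E →L[ℝ] F := fun w t =>
    (fderiv ℝ f (path w t)).comp (ContinuousLinearMap.inr ℝ Θ E)
  have hD₀ : ContDiff ℝ (⊤ : ℕ∞) ↿D₀ :=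
    ((hf.fderiv_right le_rfl).comp hpath).clm_comp contDiff_const
  refine ⟨fun w => ∫ t in (0 : ℝ)..1, D₀ w t, contDiff_integral_zero_one hD₀, fun θ p q => ?_⟩
  have hD₀_cont : Continuous (D₀ (θ, (p, q))) :=
    hD₀.continuous.comp (continuous_const.prodMk continuous_id)
  have hderiv : ∀ t ∈ Set.uIcc (0 : ℝ) 1,
      HasDerivAt (fun t => f (path (θ, (p, q)) t)) (D₀ (θ, (p, q)) t (p - q)) t := fun t _ => by
    have hline : HasDerivAt (path (θ, (p, q))) (0, p - q) t :=
      (hasDerivAt_const t θ).prodMk <| by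
        simpa using ((hasDerivAt_id t).smul_const (p - q)).const_add q
    exact ((hf.differentiable (by simp)) _).hasFDerivAt.comp_hasDerivAt t hline
  rw [ContinuousLinearMap.intervalIntegral_apply (hD₀_cont.intervalIntegrable 0 1),
    intervalIntegral.integral_eq_sub_of_hasDerivAt hderiv
      ((hD₀_cont.clm_apply continuous_const).intervalIntegrable 0 1)]
  simp [path]

theorem exists_contDiff_factor_of_antidiagonal {Θ : Type*} [NormedAddCommGroup Θ]
    [NormedSpace ℝ Θ] [CompleteSpace F] {f : Θ × (E × E) → F} (hf : ContDiff ℝ (⊤ : ℕ∞) f) :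
    ∃ M : Θ × (E × E) → E →L[ℝ] F, ContDiff ℝ (⊤ : ℕ∞) M ∧
      ∀ θ p q, f (θ, (p, -p)) = 0 → f (θ, (p, q)) = M (θ, (p, q)) (p + q) := by
  obtain ⟨D, hD, hfD⟩ := exists_contDiff_dividedDifference
    (f := fun w : (Θ × E) × E => f (w.1.1, (w.1.2, w.2))) (hf.comp (by fun_prop))
  refine ⟨fun w => D ((w.1, w.2.1), (w.2.2, -w.2.1)), hD.comp (by fun_prop), fun θ p q hp => ?_⟩
  rw [add_comm, ← sub_neg_eq_add q p, ← hfD, hp, sub_zero]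

end SmoothFunctions

section FourierKernels

variable {Θ V : Type*} [NormedAddCommGroup Θ] [NormedSpace ℝ Θ]

theorem norm_iteratedFDeriv_slice_le [NormedAddCommGroup V] [NormedSpace ℝ V] {F : Type*}
    [NormedAddCommGroup F] [NormedSpace ℝ F] {Φ : Θ × V → F} {n : ℕ} (hΦ : ContDiff ℝ n Φ)
    (θ : Θ) (v : V) :
    ‖iteratedFDeriv ℝ n (fun v => Φ (θ, v)) v‖ ≤ ‖iteratedFDeriv ℝ n Φ (θ, v)‖ := by
  have hslice : (fun v => Φ (θ, v)) =
      (fun w => Φ ((θ, 0) + w)) ∘ ContinuousLinearMap.inr ℝ Θ V := by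
    ext v; simp
  have hshift : ContDiff ℝ n fun w => Φ ((θ, 0) + w) := hΦ.comp (contDiff_const.add contDiff_id)
  rw [hslice, ContinuousLinearMap.iteratedFDeriv_comp_right _ hshift v le_rfl,
    iteratedFDeriv_comp_add_left]
  refine (ContinuousMultilinearMap.norm_compContinuousLinearMap_le _ _).trans ?_
  simpa using mul_le_of_le_one_right (norm_nonneg _)
    (pow_le_one₀ (n := n) (norm_nonneg _) (ContinuousLinearMap.norm_inr_le_one ℝ Θ V))

variable [NormedAddCommGroup V] [InnerProductSpace ℝ V]

theorem isVonNBounded_slices {Φ : Θ × V → ℂ} {P : Set Θ} {S : Set V}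
    (hΦ : ContDiff ℝ (⊤ : ℕ∞) Φ) (hP : IsCompact P) (hS : IsCompact S)
    (hΦS : ∀ θ ∈ P, ∀ v ∉ S, Φ (θ, v) = 0) :
    Bornology.IsVonNBounded ℂ {f : SchwartzMap V ℂ | ∃ θ ∈ P, ⇑f = fun v => Φ (θ, v)} := by
  rw [(schwartz_withSeminorms ℂ V ℂ).isVonNBounded_iff_seminorm_bounded]
  rintro ⟨k, n⟩
  have hcont : Continuous fun w : Θ × V => ‖w.2‖ ^ k * ‖iteratedFDeriv ℝ n Φ w‖ :=
    (continuous_snd.norm.pow k).mul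
      (hΦ.continuous_iteratedFDeriv (by exact_mod_cast le_top)).norm
  obtain ⟨C, hC⟩ := (hP.prod hS).exists_bound_of_continuousOn hcont.continuousOn
  refine ⟨max C 0 + 1, by positivity, ?_⟩
  rintro f ⟨θ, hθ, hf⟩
  refine lt_of_le_of_lt (SchwartzMap.seminorm_le_bound ℂ k n f (le_max_right C 0) fun v => ?_)
    (lt_add_one _)
  by_cases hv : v ∈ S
  · calc ‖v‖ ^ k * ‖iteratedFDeriv ℝ n f v‖
        ≤ ‖v‖ ^ k * ‖iteratedFDeriv ℝ n Φ (θ, v)‖ := by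
          rw [hf]
          gcongr
          exact norm_iteratedFDeriv_slice_le (hΦ.of_le (by exact_mod_cast le_top)) θ v
      _ ≤ C := (le_abs_self _).trans (hC (θ, v) ⟨hθ, hv⟩)
      _ ≤ max C 0 := le_max_left _ _
  · have hsupp : tsupport f ⊆ S := closure_minimal
      (fun v hv => by_contra fun hvS => hv (by rw [hf]; exact hΦS θ hθ v hvS)) hS.isClosed
    have hzero : iteratedFDeriv ℝ n f v = 0 :=
      image_eq_zero_of_notMem_tsupport fun h => hv (hsupp (tsupport_iteratedFDeriv_subset n h))
    simp [hzero]

variable [FiniteDimensional ℝ V] [MeasurableSpace V] [BorelSpace V]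

theorem exists_integral_norm_fourierInv_le {s : Set (SchwartzMap V ℂ)}
    (hs : Bornology.IsVonNBounded ℂ s) :
    ∃ C : ℝ, ∀ f ∈ s, ∫ v, ‖(FourierTransform.fourierCLE ℂ (SchwartzMap V ℂ)).symm f v‖ ≤ C := by
  have himage := hs.image ((SchwartzMap.toLpCLM ℂ ℂ 1 (volume : Measure V)).comp
    (FourierTransform.fourierCLE ℂ (SchwartzMap V ℂ)).symm.toContinuousLinearMap)
  obtain ⟨C, hC⟩ := (NormedSpace.isVonNBounded_iff' ℂ).1 himage
  refine ⟨C, fun f hf => ?_⟩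
  rw [← SchwartzMap.norm_toLp_one]
  exact hC _ (Set.mem_image_of_mem _ hf)

theorem exists_schwartz_fourier_eqOn {Φ : Θ × V → ℂ} {P : Set Θ} {Z : Set V}
    (hΦ : ContDiff ℝ (⊤ : ℕ∞) Φ) (hP : IsCompact P) (hZ : IsCompact Z) :
    ∃ C : ℝ, ∀ θ ∈ P, ∃ φ : SchwartzMap V ℂ, ∫ v, ‖φ v‖ ≤ C ∧
      ∀ w ∈ Z, FourierTransform.fourier (φ : V → ℂ) w = Φ (θ, w) := by
  obtain ⟨R, hR, hZR⟩ := hZ.isBounded.exists_pos_norm_le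
  let χ : ContDiffBump (0 : V) := ⟨R, R + 1, hR, lt_add_one R⟩
  let Ψ : Θ × V → ℂ := fun w => χ w.2 • Φ w
  have hΨ : ContDiff ℝ (⊤ : ℕ∞) Ψ := (χ.contDiff.comp contDiff_snd).smul hΦ
  have hΨ_zero : ∀ θ, ∀ v ∉ Metric.closedBall (0 : V) (R + 1), Ψ (θ, v) = 0 := fun θ v hv => by
    simp only [Ψ, χ.zero_of_le_dist (not_le.1 hv).le, zero_smul]
  obtain ⟨C, hC⟩ := exists_integral_norm_fourierInv_le
    (isVonNBounded_slices hΨ hP (isCompact_closedBall 0 (R + 1)) fun θ _ => hΨ_zero θ)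
  refine ⟨C, fun θ hθ => ?_⟩
  let f : SchwartzMap V ℂ := (HasCompactSupport.intro (isCompact_closedBall 0 (R + 1))
    (hΨ_zero θ)).toSchwartzMap (hΨ.comp (contDiff_const.prodMk contDiff_id))
  refine ⟨_, hC f ⟨θ, hθ, rfl⟩, fun w hw => ?_⟩
  have hχw : χ w = 1 := χ.one_of_mem_closedBall (by simpa using hZR w hw)
  calc _ = f w := by
        rw [← SchwartzMap.fourier_coe]
        exact congrArg (· w) ((FourierTransform.fourierCLE ℂ (SchwartzMap V ℂ)).apply_symm_apply f)
    _ = Φ (θ, w) := by change χ w • Φ (θ, w) = _; rw [hχw, one_smul]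

variable {F : Type*} [NormedAddCommGroup F] [NormedSpace ℝ F]

/-- The `L¹`-normalized dilate `c ^ n φ(c ·)` of a function on an `n`-dimensional space, used to
rescale a kernel to a given frequency scale. -/
def dilate (c : ℝ) (φ : V → F) (v : V) : F := c ^ Module.finrank ℝ V • φ (c • v)

theorem integrable_dilate {c : ℝ} (hc : c ≠ 0) {φ : V → F} (hφ : Integrable φ) :
    Integrable (dilate c φ) :=
  (hφ.comp_smul hc).smul (c ^ Module.finrank ℝ V)

theorem integral_dilate {c : ℝ} (hc : 0 < c) (φ : V → F) : ∫ v, dilate c φ v = ∫ v, φ v := by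
  simp only [dilate]
  rw [integral_smul, Measure.integral_comp_smul, abs_of_pos (by positivity),
    smul_inv_smul₀ (by positivity)]

theorem integral_norm_dilate {c : ℝ} (hc : 0 < c) (φ : V → F) :
    ∫ v, ‖dilate c φ v‖ = ∫ v, ‖φ v‖ := by
  rw [← integral_dilate hc fun v => ‖φ v‖]
  simp only [dilate, norm_smul, Real.norm_of_nonneg (pow_nonneg hc.le _), smul_eq_mul]

theorem fourier_dilate {E : Type*} [NormedAddCommGroup E] [NormedSpace ℂ E] {c : ℝ} (hc : 0 < c)
    (φ : V → E) (w : V) :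
    FourierTransform.fourier (dilate c φ) w = FourierTransform.fourier φ (c⁻¹ • w) := by
  rw [Real.fourier_eq', Real.fourier_eq', ← integral_dilate hc
    fun v => cexp (↑(-2 * Real.pi * inner ℝ v (c⁻¹ • w)) * I) • φ v]
  congr 1 with v
  simp only [dilate, real_inner_smul_left, real_inner_smul_right, inv_mul_cancel_left₀ hc.ne']
  rw [smul_comm]

end FourierKernels

section PlaneKernels

/-- The frequency plane `ℝ²` with its Euclidean norm, as opposed to the sup norm of `ℝ × ℝ`. -/
abbrev Plane := WithLp 2 (ℝ × ℝ)

/-- The frequency `ξ` in units of `μ`. -/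
def rescale (μ : ℝ) (ξ : ℝ × ℝ) : Plane := μ⁻¹ • WithLp.toLp 2 ξ

theorem norm_rescale {μ : ℝ} (hμ : 0 < μ) (ξ : ℝ × ℝ) : ‖rescale μ ξ‖ = e2 ξ / μ := by
  rw [rescale, norm_smul, norm_inv, Real.norm_of_nonneg hμ.le, inv_mul_eq_div,
    WithLp.prod_norm_eq_of_L2]
  simp [e2]

theorem norm_rescale_le_one {μ : ℝ} (hμ : 0 < μ) {ξ : ℝ × ℝ} (hξ : e2 ξ ≤ μ) :
    ‖rescale μ ξ‖ ≤ 1 := by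
  rw [norm_rescale hμ]
  exact div_le_one_of_le₀ hξ hμ.le

/-- The domain of the kernels as a Euclidean space. -/
def pairEquiv : WithLp 2 (Plane × Plane) ≃L[ℝ] (ℝ × ℝ) × (ℝ × ℝ) :=
  (WithLp.prodContinuousLinearEquiv 2 ℝ Plane Plane).trans
    ((WithLp.prodContinuousLinearEquiv 2 ℝ ℝ ℝ).prodCongr
      (WithLp.prodContinuousLinearEquiv 2 ℝ ℝ ℝ))

theorem measurePreserving_pairEquiv : MeasurePreserving pairEquiv :=
  ((WithLp.volume_preserving_ofLp ℝ ℝ).prod (WithLp.volume_preserving_ofLp ℝ ℝ)).comp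
    (WithLp.volume_preserving_ofLp Plane Plane)

theorem measurableEmbedding_pairEquiv : MeasurableEmbedding pairEquiv :=
  pairEquiv.toHomeomorph.measurableEmbedding

theorem mOf_eq_fourier (K : (ℝ × ℝ) × (ℝ × ℝ) → ℂ) (ξ η : ℝ × ℝ) :
    mOf K ξ η = FourierTransform.fourier (K ∘ pairEquiv)
      ((2 * Real.pi)⁻¹ • pairEquiv.symm (ξ, η)) := by
  rw [mOf, ← measurePreserving_pairEquiv.integral_comp measurableEmbedding_pairEquiv,
    Real.fourier_eq']
  congr 1 with v
  have hinner : inner ℝ v (pairEquiv.symm (ξ, η)) =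
      ξ.1 * (pairEquiv v).1.1 + ξ.2 * (pairEquiv v).1.2
        + η.1 * (pairEquiv v).2.1 + η.2 * (pairEquiv v).2.2 := by
    simp only [pairEquiv, ContinuousLinearEquiv.symm_trans_apply,
      ContinuousLinearEquiv.prodCongr_symm, ContinuousLinearEquiv.prodCongr_apply,
      WithLp.prodContinuousLinearEquiv_symm_apply, WithLp.prod_inner_apply, WithLp.ofLp_fst,
      WithLp.ofLp_snd, RCLike.inner_apply, Real.ringHom_apply, ContinuousLinearEquiv.trans_apply,
      WithLp.prodContinuousLinearEquiv_apply]
    ring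
  rw [← hinner, real_inner_smul_right, neg_mul (2 : ℝ), neg_mul, neg_mul (2 * Real.pi),
    mul_inv_cancel_left₀ (by positivity), smul_eq_mul, mul_comm, Function.comp_apply]
  push_cast
  ring_nf

variable {Θ : Type*} [NormedAddCommGroup Θ] [NormedSpace ℝ Θ] {P : Set Θ}

theorem exists_kernel_mOf_eq {m : Θ × (Plane × Plane) → ℝ} (hm : ContDiff ℝ (⊤ : ℕ∞) m)
    (hP : IsCompact P) :
    ∃ C : ℝ, ∀ θ ∈ P, ∀ μ > 0, ∃ K : (ℝ × ℝ) × (ℝ × ℝ) → ℂ, Integrable K ∧ ∫ z, ‖K z‖ ≤ C ∧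
      ∀ ξ η, e2 ξ ≤ μ → e2 η ≤ μ →
        mOf K ξ η = m (θ, (rescale μ ξ, rescale μ η)) := by
  let ofPair := WithLp.prodContinuousLinearEquiv 2 ℝ Plane Plane
  let Φ : Θ × WithLp 2 (Plane × Plane) → ℂ := fun w => m (w.1, ofPair w.2)
  have hΦ : ContDiff ℝ (⊤ : ℕ∞) Φ :=
    ofRealCLM.contDiff.comp (hm.comp (contDiff_fst.prodMk (ofPair.contDiff.comp contDiff_snd)))
  have hZ : IsCompact (ofPair.symm '' (Metric.closedBall 0 1 ×ˢ Metric.closedBall 0 1)) :=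
    ((isCompact_closedBall 0 1).prod (isCompact_closedBall 0 1)).image ofPair.symm.continuous
  obtain ⟨C, hC⟩ := exists_schwartz_fourier_eqOn hΦ hP hZ
  refine ⟨C, fun θ hθ μ hμ => ?_⟩
  obtain ⟨φ, hφC, hφ⟩ := hC θ hθ
  have hc : 0 < μ / (2 * Real.pi) := by positivity
  let K : (ℝ × ℝ) × (ℝ × ℝ) → ℂ := dilate (μ / (2 * Real.pi)) φ ∘ pairEquiv.symm
  have hK : K ∘ pairEquiv = dilate (μ / (2 * Real.pi)) φ := by ext v; simp [K]
  refine ⟨K, ?_, ?_, fun ξ η hξ hη => ?_⟩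
  · rw [← measurePreserving_pairEquiv.integrable_comp_emb measurableEmbedding_pairEquiv, hK]
    exact integrable_dilate hc.ne' φ.integrable
  · rw [← measurePreserving_pairEquiv.integral_comp measurableEmbedding_pairEquiv]
    simpa [K, integral_norm_dilate hc] using hφC
  · have hscale : (μ / (2 * Real.pi))⁻¹ • (2 * Real.pi)⁻¹ • pairEquiv.symm (ξ, η) =
        ofPair.symm (rescale μ ξ, rescale μ η) := by
      rw [smul_smul, inv_div, div_mul_eq_mul_div, mul_inv_cancel₀ (by positivity), one_div]
      rfl
    rw [mOf_eq_fourier, hK, fourier_dilate hc, hscale,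
      hφ _ (Set.mem_image_of_mem _
        ⟨by simpa using norm_rescale_le_one hμ hξ, by simpa using norm_rescale_le_one hμ hη⟩)]
    simp [Φ]

/-- The symbol of `-i ∑ⱼ ∂ⱼ T_{mⱼ}`, where `mⱼ` is the Fourier transform of `K j`. -/
def divSymbol (K : Fin 2 → (ℝ × ℝ) × (ℝ × ℝ) → ℂ) (ξ η : ℝ × ℝ) : ℂ :=
  ((ξ + η).1 : ℂ) * mOf (K 0) ξ η + ((ξ + η).2 : ℂ) * mOf (K 1) ξ η

/-- The symbols `μ S(θ, ξ / μ, η / μ)` with `θ ∈ P` and `μ > 0` are, on frequencies of size at most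
`μ`, symbols of divergences `-i ∑ⱼ ∂ⱼ T_{mⱼ}` whose kernels are bounded in `L¹` uniformly in `θ` and
`μ`. -/
def HasUniformDivKernels (P : Set Θ) (S : Θ × (Plane × Plane) → ℝ) : Prop :=
  ∃ C : ℝ, ∀ θ ∈ P, ∀ μ > 0, ∃ K : Fin 2 → (ℝ × ℝ) × (ℝ × ℝ) → ℂ,
    (∀ j, Integrable (K j) ∧ ∫ z, ‖K j z‖ ≤ C) ∧ ∀ ξ η, e2 ξ ≤ μ → e2 η ≤ μ →
      divSymbol K ξ η = μ * S (θ, (rescale μ ξ, rescale μ η))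

theorem hasUniformDivKernels_clm_apply_add {M : Θ × (Plane × Plane) → Plane →L[ℝ] ℝ}
    (hM : ContDiff ℝ (⊤ : ℕ∞) M) (hP : IsCompact P) :
    HasUniformDivKernels P fun w => M w (w.2.1 + w.2.2) := by
  let e : Fin 2 → Plane := ![WithLp.toLp 2 (1, 0), WithLp.toLp 2 (0, 1)]
  have hcoord : ∀ j, ContDiff ℝ (⊤ : ℕ∞) fun w => M w (e j) := fun j => hM.clm_apply contDiff_const
  choose C hC using fun j => exists_kernel_mOf_eq (hcoord j) hP
  refine ⟨max (C 0) (C 1), fun θ hθ μ hμ => ?_⟩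
  choose K hK_int hK_le hK using fun j => hC j θ hθ μ hμ
  refine ⟨K, Fin.forall_fin_two.2 ⟨⟨hK_int 0, (hK_le 0).trans (le_max_left _ _)⟩,
    ⟨hK_int 1, (hK_le 1).trans (le_max_right _ _)⟩⟩, ?_⟩
  intro ξ η hξ hη
  dsimp only
  have hsum : rescale μ ξ + rescale μ η =
      (μ⁻¹ * (ξ + η).1) • e 0 + (μ⁻¹ * (ξ + η).2) • e 1 := by
    refine WithLp.ofLp_injective 2 (Prod.ext ?_ ?_) <;> simp [e, rescale, mul_add]
  rw [divSymbol, hK 0 ξ η hξ hη, hK 1 ξ η hξ hη, hsum, map_add, map_smul, map_smul]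
  have hμ' : (μ : ℂ) ≠ 0 := ofReal_ne_zero.2 hμ.ne'
  push_cast [smul_eq_mul]
  rw [mul_add, ← mul_assoc, ← mul_assoc, ← mul_assoc, ← mul_assoc, mul_inv_cancel₀ hμ', one_mul,
    one_mul]

theorem hasUniformDivKernels_of_contDiffOn [FiniteDimensional ℝ Θ] {U : Set (Θ × (Plane × Plane))}
    {S : Θ × (Plane × Plane) → ℝ} (hP : IsCompact P) (hU : IsOpen U)
    (hPU : P ×ˢ (Metric.closedBall 0 1 ×ˢ Metric.closedBall 0 1) ⊆ U)
    (hS : ContDiffOn ℝ (⊤ : ℕ∞) S U) (hS_zero : ∀ θ ∈ P, ∀ p, S (θ, (p, -p)) = 0) :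
    HasUniformDivKernels P S := by
  have hclosed := (hP.prod ((isCompact_closedBall (0 : Plane) 1).prod
    (isCompact_closedBall (0 : Plane) 1))).isClosed
  obtain ⟨f, hf, hfS⟩ := exists_contDiff_eqOn_of_contDiffOn hU hclosed hPU hS
  obtain ⟨M, hM, hfM⟩ := exists_contDiff_factor_of_antidiagonal hf
  obtain ⟨C, hC⟩ := hasUniformDivKernels_clm_apply_add hM hP
  refine ⟨C, fun θ hθ μ hμ => ?_⟩
  obtain ⟨K, hKC, hK⟩ := hC θ hθ μ hμ
  refine ⟨K, hKC, fun ξ η hξ hη => ?_⟩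
  have hfS_ball : ∀ p q : Plane, ‖p‖ ≤ 1 → ‖q‖ ≤ 1 → f (θ, (p, q)) = S (θ, (p, q)) :=
    fun p q hp hq => hfS ⟨hθ, mem_closedBall_zero_iff.2 hp, mem_closedBall_zero_iff.2 hq⟩
  have hξ1 := norm_rescale_le_one hμ hξ
  have hf_zero : f (θ, (rescale μ ξ, -rescale μ ξ)) = 0 := by
    rw [hfS_ball _ _ hξ1 (by rwa [norm_neg]), hS_zero θ hθ]
  calc divSymbol K ξ η
      = μ * M (θ, (rescale μ ξ, rescale μ η)) (rescale μ ξ + rescale μ η) := hK ξ η hξ hη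
    _ = μ * S (θ, (rescale μ ξ, rescale μ η)) := by
      rw [← hfM _ _ _ hf_zero, hfS_ball _ _ hξ1 (norm_rescale_le_one hμ hη)]

end PlaneKernels

section Symbols

variable {E : Type*} [NormedAddCommGroup E] [InnerProductSpace ℝ E]

/-- The even symbol `H` with `(‖l + ε p‖ + ‖l - ε p‖) / 2 - 1 = ε² H` for `‖l‖ = 1`, in a form that
is visibly smooth at `ε = 0`; the argument is `((l, ε), p)`. -/
def evenSymbol (w : (E × ℝ) × E) : ℝ :=
  4 * (‖w.2‖ ^ 2 - inner ℝ w.1.1 w.2 ^ 2) /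
    ((‖w.1.1 + w.1.2 • w.2‖ * ‖w.1.1 - w.1.2 • w.2‖ + 1 - ‖w.1.2 • w.2‖ ^ 2) *
      (‖w.1.1 + w.1.2 • w.2‖ + ‖w.1.1 - w.1.2 • w.2‖ + 2))

/-- The odd symbol `G` with `(‖l + ε p‖ - ‖l - ε p‖) / 2 - ε ⟪l, p⟫ = ε³ G` for `‖l‖ = 1`, in the
same form. -/
def oddSymbol (w : (E × ℝ) × E) : ℝ :=
  -2 * inner ℝ w.1.1 w.2 * evenSymbol w /
    (‖w.1.1 + w.1.2 • w.2‖ + ‖w.1.1 - w.1.2 • w.2‖)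

theorem evenSymbol_neg (θ : E × ℝ) (p : E) : evenSymbol (θ, -p) = evenSymbol (θ, p) := by
  simp only [evenSymbol, smul_neg, norm_neg, inner_neg_right, neg_sq, sub_neg_eq_add,
    ← sub_eq_add_neg]
  ring

theorem oddSymbol_neg (θ : E × ℝ) (p : E) : oddSymbol (θ, -p) = -oddSymbol (θ, p) := by
  simp only [oddSymbol, evenSymbol_neg, smul_neg, inner_neg_right, sub_neg_eq_add,
    ← sub_eq_add_neg]
  ring

/-- An open set of parameters on which no norm in the symbols vanishes and no denominator does. -/
def symbolDomain (E : Type*) [NormedAddCommGroup E] [InnerProductSpace ℝ E] : Set ((E × ℝ) × E) :=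
  {w | ‖w.1.2 • w.2‖ < ‖w.1.1‖ ∧ ‖w.1.2 • w.2‖ < 1}

theorem isOpen_symbolDomain : IsOpen (symbolDomain E) := by
  have hsmul : Continuous fun w : (E × ℝ) × E => ‖w.1.2 • w.2‖ := by fun_prop
  exact (isOpen_lt hsmul (by fun_prop)).inter (isOpen_lt hsmul continuous_const)

theorem norm_add_smul_pos {w : (E × ℝ) × E} (hw : w ∈ symbolDomain E) :
    0 < ‖w.1.1 + w.1.2 • w.2‖ :=
  norm_pos_iff.2 fun h => hw.1.ne (by rw [eq_neg_of_add_eq_zero_left h, norm_neg])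

theorem norm_sub_smul_pos {w : (E × ℝ) × E} (hw : w ∈ symbolDomain E) :
    0 < ‖w.1.1 - w.1.2 • w.2‖ :=
  norm_pos_iff.2 fun h => hw.1.ne (by rw [sub_eq_zero.1 h])

theorem norm_mul_norm_add_one_sub_pos {w : (E × ℝ) × E} (hw : w ∈ symbolDomain E) :
    0 < ‖w.1.1 + w.1.2 • w.2‖ * ‖w.1.1 - w.1.2 • w.2‖ + 1 - ‖w.1.2 • w.2‖ ^ 2 := by
  have hlt : ‖w.1.2 • w.2‖ ^ 2 < 1 := pow_lt_one₀ (norm_nonneg _) hw.2 two_ne_zero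
  have hmul := mul_pos (norm_add_smul_pos hw) (norm_sub_smul_pos hw)
  linarith

theorem contDiffAt_norm_add_smul {n : WithTop ℕ∞} {w : (E × ℝ) × E} (hw : w ∈ symbolDomain E) :
    ContDiffAt ℝ n (fun w : (E × ℝ) × E => ‖w.1.1 + w.1.2 • w.2‖) w :=
  ContDiffAt.norm ℝ (by fun_prop) (norm_pos_iff.1 (norm_add_smul_pos hw))

theorem contDiffAt_norm_sub_smul {n : WithTop ℕ∞} {w : (E × ℝ) × E} (hw : w ∈ symbolDomain E) :
    ContDiffAt ℝ n (fun w : (E × ℝ) × E => ‖w.1.1 - w.1.2 • w.2‖) w :=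
  ContDiffAt.norm ℝ (by fun_prop) (norm_pos_iff.1 (norm_sub_smul_pos hw))

theorem contDiffOn_evenSymbol {n : WithTop ℕ∞} : ContDiffOn ℝ n evenSymbol (symbolDomain E) := by
  intro w hw
  have hA := norm_add_smul_pos hw
  have hB := norm_sub_smul_pos hw
  have hden := norm_mul_norm_add_one_sub_pos hw
  have hcA := contDiffAt_norm_add_smul (n := n) hw
  have hcB := contDiffAt_norm_sub_smul (n := n) hw
  have hsq : ContDiffAt ℝ n (fun w : (E × ℝ) × E => ‖w.1.2 • w.2‖ ^ 2) w :=
    ContDiffAt.norm_sq ℝ (by fun_prop)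
  have hsq' : ContDiffAt ℝ n (fun w : (E × ℝ) × E => ‖w.2‖ ^ 2) w :=
    ContDiffAt.norm_sq ℝ (by fun_prop)
  have hinner : ContDiffAt ℝ n (fun w : (E × ℝ) × E => inner ℝ w.1.1 w.2) w :=
    ContDiffAt.inner ℝ (by fun_prop) (by fun_prop)
  refine ContDiffAt.contDiffWithinAt (ContDiffAt.div (by fun_prop) (by fun_prop) ?_)
  positivity

theorem contDiffOn_oddSymbol {n : WithTop ℕ∞} : ContDiffOn ℝ n oddSymbol (symbolDomain E) := by
  intro w hw
  have hA := norm_add_smul_pos hw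
  have hB := norm_sub_smul_pos hw
  have hcA := contDiffAt_norm_add_smul (n := n) hw
  have hcB := contDiffAt_norm_sub_smul (n := n) hw
  have hinner : ContDiffAt ℝ n (fun w : (E × ℝ) × E => inner ℝ w.1.1 w.2) w :=
    ContDiffAt.inner ℝ (by fun_prop) (by fun_prop)
  have heven := contDiffOn_evenSymbol.contDiffAt (isOpen_symbolDomain.mem_nhds hw) (n := n)
  refine ContDiffAt.contDiffWithinAt (ContDiffAt.div (by fun_prop) (by fun_prop) ?_)
  positivity

variable {l p : E} {ε : ℝ}

theorem half_norm_add_add_norm_sub (hl : ‖l‖ = 1) (hp : ‖ε • p‖ < 1) :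
    (‖l + ε • p‖ + ‖l - ε • p‖) / 2 - 1 = ε ^ 2 * evenSymbol ((l, ε), p) := by
  have hden := norm_mul_norm_add_one_sub_pos (w := ((l, ε), p)) ⟨by rwa [hl], hp⟩
  have hA : ‖l + ε • p‖ ^ 2 = 1 + 2 * ε * inner ℝ l p + ‖ε • p‖ ^ 2 := by
    rw [norm_add_sq_real, hl, real_inner_smul_right]; ring
  have hB : ‖l - ε • p‖ ^ 2 = 1 - 2 * ε * inner ℝ l p + ‖ε • p‖ ^ 2 := by
    rw [norm_sub_sq_real, hl, real_inner_smul_right]; ring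
  have hεp : ‖ε • p‖ ^ 2 = ε ^ 2 * ‖p‖ ^ 2 := by
    rw [norm_smul, mul_pow, Real.norm_eq_abs, sq_abs]
  simp only [evenSymbol] at hden ⊢
  set A := ‖l + ε • p‖
  set B := ‖l - ε • p‖
  set r := ‖ε • p‖ ^ 2
  have hsq : (A * B) ^ 2 - (1 - r) ^ 2 = 4 * ε ^ 2 * (‖p‖ ^ 2 - inner ℝ l p ^ 2) := by
    rw [mul_pow, hA, hB]
    linear_combination 4 * hεp
  have hsum : (A + B - 2) * (A + B + 2) = 2 * (A * B - (1 - r)) := by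
    linear_combination hA + hB
  rw [mul_div_assoc', eq_div_iff (by positivity)]
  linear_combination ((A * B + 1 - r) / 2) * hsum + hsq

theorem half_norm_add_sub_norm_sub (hl : ‖l‖ = 1) (hp : ‖ε • p‖ < 1) :
    (‖l + ε • p‖ - ‖l - ε • p‖) / 2 - ε * inner ℝ l p = ε ^ 3 * oddSymbol ((l, ε), p) := by
  have hw : ((l, ε), p) ∈ symbolDomain E := ⟨by rwa [hl], hp⟩
  have hsum : 0 < ‖l + ε • p‖ + ‖l - ε • p‖ :=
    add_pos (norm_add_smul_pos hw) (norm_sub_smul_pos hw)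
  have hdiff : ‖l + ε • p‖ ^ 2 - ‖l - ε • p‖ ^ 2 = 4 * ε * inner ℝ l p := by
    rw [norm_add_sq_real, norm_sub_sq_real, real_inner_smul_right]; ring
  rw [oddSymbol, mul_div_assoc', eq_div_iff hsum.ne']
  linear_combination hdiff / 2 - 2 * ε * inner ℝ l p * half_norm_add_add_norm_sub hl hp

/-- The parameters `(l, ε)` with `|l| = 1` and `0 ≤ ε ≤ ρ`, where `ε` stands for `μ / λ`. -/
def parameterSet (ρ : ℝ) : Set (Plane × ℝ) := Metric.sphere 0 1 ×ˢ Set.Icc 0 ρ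

theorem isCompact_parameterSet (ρ : ℝ) : IsCompact (parameterSet ρ) :=
  (isCompact_sphere 0 1).prod isCompact_Icc

theorem mem_symbolDomain {ρ : ℝ} (hρ : ρ < 1) {θ : Plane × ℝ} (hθ : θ ∈ parameterSet ρ)
    {p : Plane} (hp : ‖p‖ ≤ 1) : (θ, p) ∈ symbolDomain Plane := by
  have hlt : ‖θ.2 • p‖ < 1 := by
    rw [norm_smul, Real.norm_of_nonneg hθ.2.1]
    exact (mul_le_of_le_one_right hθ.2.1 hp).trans_lt (hθ.2.2.trans_lt hρ)
  exact ⟨by rwa [mem_sphere_zero_iff_norm.1 hθ.1], hlt⟩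

variable {ρ : ℝ}

theorem hasUniformDivKernels_of_symbolDomain (hρ : ρ < 1)
    {S : (Plane × ℝ) × (Plane × Plane) → ℝ}
    (hS : ContDiffOn ℝ (⊤ : ℕ∞) S
      {w | (w.1, w.2.1) ∈ symbolDomain Plane ∧ (w.1, w.2.2) ∈ symbolDomain Plane})
    (hS_zero : ∀ θ p, S (θ, (p, -p)) = 0) :
    HasUniformDivKernels (parameterSet ρ) S := by
  refine hasUniformDivKernels_of_contDiffOn (isCompact_parameterSet ρ) ?_ ?_ hS fun θ _ => hS_zero θ
  · exact (isOpen_symbolDomain.preimage (by fun_prop)).inter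
      (isOpen_symbolDomain.preimage (by fun_prop))
  · rintro ⟨θ, p, q⟩ ⟨hθ, hp, hq⟩
    exact ⟨mem_symbolDomain hρ hθ (mem_closedBall_zero_iff.1 hp),
      mem_symbolDomain hρ hθ (mem_closedBall_zero_iff.1 hq)⟩

theorem hasUniformDivKernels_oddSymbol (hρ : ρ < 1) :
    HasUniformDivKernels (parameterSet ρ) fun w =>
      (oddSymbol (w.1, w.2.1) + oddSymbol (w.1, w.2.2)) / 2 := by
  refine hasUniformDivKernels_of_symbolDomain hρ ?_ fun θ p => ?_
  · exact ((contDiffOn_oddSymbol.comp (by fun_prop) fun _ hw => hw.1).add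
      (contDiffOn_oddSymbol.comp (by fun_prop) fun _ hw => hw.2)).div_const 2
  · simp only [oddSymbol_neg, add_neg_cancel, zero_div]

theorem hasUniformDivKernels_evenSymbol_mul (hρ : ρ < 1) (e : Plane →L[ℝ] ℝ) :
    HasUniformDivKernels (parameterSet ρ) fun w =>
      (evenSymbol (w.1, w.2.1) * e w.2.2 + evenSymbol (w.1, w.2.2) * e w.2.1) / 2 := by
  refine hasUniformDivKernels_of_symbolDomain hρ ?_ fun θ p => ?_
  · exact (((contDiffOn_evenSymbol.comp (by fun_prop) fun _ hw => hw.1).mul (by fun_prop)).add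
      ((contDiffOn_evenSymbol.comp (by fun_prop) fun _ hw => hw.2).mul (by fun_prop))).div_const 2
  · simp only [evenSymbol_neg, map_neg, mul_neg, neg_add_cancel, zero_div]

end Symbols

section FourierSeries

/-- The `n`-th Fourier coefficient of a `2π`-periodic function of one variable. -/
def circleCoeff (f : ℝ → ℂ) (n : ℤ) : ℂ :=
  (1 / (2 * Real.pi) : ℂ) *
    ∫ t in Set.Icc (-Real.pi) Real.pi, f t * exp (-I * ((n * t : ℝ) : ℂ))

theorem fourierCoeff_eq_circleCoeff [Fact (0 < 2 * Real.pi)]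
    (g : AddCircle (2 * Real.pi) → ℂ) (n : ℤ) :
    fourierCoeff g n = circleCoeff (fun t => g t) n := by
  have hpi : (Real.pi : ℂ) ≠ 0 := ofReal_ne_zero.2 Real.pi_ne_zero
  rw [fourierCoeff_eq_intervalIntegral _ n (-Real.pi), circleCoeff,
    show -Real.pi + 2 * Real.pi = Real.pi by ring,
    intervalIntegral.integral_of_le (by linarith [Real.pi_pos]), ← integral_Icc_eq_integral_Ioc,
    real_smul]
  push_cast
  congr 2 with t
  rw [fourier_coe_apply, smul_eq_mul, mul_comm]
  push_cast
  field_simp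

theorem eq_sum_circleCoeff {f : ℝ → ℂ} (hf : Continuous f)
    (hper : Function.Periodic f (2 * Real.pi)) {s : Finset ℤ}
    (hs : ∀ n ∉ s, circleCoeff f n = 0) (x : ℝ) :
    f x = ∑ n ∈ s, circleCoeff f n * exp (I * ((n * x : ℝ) : ℂ)) := by
  have : Fact (0 < 2 * Real.pi) := ⟨Real.two_pi_pos⟩
  have hpi : (Real.pi : ℂ) ≠ 0 := ofReal_ne_zero.2 Real.pi_ne_zero
  let g : C(AddCircle (2 * Real.pi), ℂ) := ⟨hper.lift, continuous_coinduced_dom.mpr hf⟩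
  have hcoeff : ∀ n, fourierCoeff g n = circleCoeff f n := fourierCoeff_eq_circleCoeff g
  have hsum := has_pointwise_sum_fourier_series_of_summable
    (summable_of_ne_finset_zero (s := s) fun n hn => by rw [hcoeff, hs n hn])
    (x : AddCircle (2 * Real.pi))
  have hfin : HasSum (fun n => fourierCoeff g n • fourier n (x : AddCircle (2 * Real.pi)))
      (∑ n ∈ s, fourierCoeff g n • fourier n (x : AddCircle (2 * Real.pi))) :=
    hasSum_sum_of_ne_finset_zero fun n hn => by rw [hcoeff, hs n hn, zero_smul]
  calc f x = ∑ n ∈ s, fourierCoeff g n • fourier n (x : AddCircle (2 * Real.pi)) :=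
        hsum.unique hfin
    _ = _ := by
      refine Finset.sum_congr rfl fun n _ => ?_
      rw [hcoeff, smul_eq_mul, fourier_coe_apply]
      push_cast
      field_simp

/-- The character `e^{ik·x}` of the torus. -/
def character (k : Z2) (x : ℝ × ℝ) : ℂ := exp (I * (dotZ k x : ℝ))

theorem character_add (k j : Z2) (x : ℝ × ℝ) :
    character (k + j) x = character k x * character j x := by
  rw [character, character, character, ← exp_add]
  simp only [dotZ, Prod.fst_add, Prod.snd_add]
  push_cast
  ring_nf

theorem character_eq_mul (k : Z2) (x : ℝ × ℝ) :
    character k x = exp (I * ((k.1 * x.1 : ℝ) : ℂ)) * exp (I * ((k.2 * x.2 : ℝ) : ℂ)) := by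
  rw [character, ← exp_add, ← mul_add, ← ofReal_add, dotZ]

variable {b : ℝ × ℝ → ℂ}

theorem continuous_circleCoeff_slice (hb : Continuous b) (n : ℤ) :
    Continuous fun y => circleCoeff (fun t => b (y, t)) n := by
  simp only [circleCoeff, integral_Icc_eq_integral_Ioc,
    ← intervalIntegral.integral_of_le (neg_le_self Real.pi_pos.le)]
  refine continuous_const.mul
    (intervalIntegral.continuous_parametric_intervalIntegral_of_continuous' ?_ _ _)
  simp only [Function.uncurry_def]
  fun_prop

theorem fCoeff_eq_circleCoeff_circleCoeff (hb : Continuous b) (k : Z2) :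
    fCoeff b k = circleCoeff (fun y => circleCoeff (fun t => b (y, t)) k.2) k.1 := by
  have hint : IntegrableOn (fun z : ℝ × ℝ => b z * exp (-I * (dotZ k z : ℝ)))
      (Set.Icc (-Real.pi) Real.pi ×ˢ Set.Icc (-Real.pi) Real.pi) (volume.prod volume) := by
    refine ContinuousOn.integrableOn_compact (isCompact_Icc.prod isCompact_Icc) ?_
    unfold dotZ
    fun_prop
  rw [fCoeff, Q2, ← Set.Icc_prod_Icc, Measure.volume_eq_prod, setIntegral_prod _ hint]
  simp only [circleCoeff, mul_assoc, ← integral_mul_const, integral_const_mul]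
  rw [← mul_assoc]
  congr 1
  · ring
  · congr 1 with y
    congr 1 with t
    rw [← exp_add, dotZ]
    push_cast
    ring_nf

theorem eq_sum_fCoeff (hb : Continuous b) (hper : Periodic2 b) {S : Finset Z2}
    (hS : ∀ k ∉ S, fCoeff b k = 0) (x : ℝ × ℝ) :
    b x = ∑ k ∈ S, fCoeff b k * character k x := by
  let g : ℤ → ℝ → ℂ := fun n y => circleCoeff (fun t => b (y, t)) n
  let s := S.image Prod.fst
  let t := S.image Prod.snd
  have hst : ∀ k : Z2, k.1 ∉ s ∨ k.2 ∉ t → fCoeff b k = 0 := fun k hk => hS k fun hkS =>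
    hk.elim (· (Finset.mem_image_of_mem _ hkS)) (· (Finset.mem_image_of_mem _ hkS))
  have hgper : ∀ n, Function.Periodic (g n) (2 * Real.pi) := fun n y => by
    simp only [g, fun t => (hper (y, t)).1]
  have hg : ∀ n y, g n y = ∑ m ∈ s, fCoeff b (m, n) * exp (I * ((m * y : ℝ) : ℂ)) := fun n y => by
    simp only [fCoeff_eq_circleCoeff_circleCoeff hb] at hst ⊢
    exact eq_sum_circleCoeff (continuous_circleCoeff_slice hb n) (hgper n)
      (fun m hm => hst (m, n) (Or.inl hm)) y
  have hslice : b x = ∑ n ∈ t, g n x.1 * exp (I * ((n * x.2 : ℝ) : ℂ)) :=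
    eq_sum_circleCoeff (f := fun t => b (x.1, t)) (by fun_prop) (fun t => (hper (x.1, t)).2)
      (fun n hn => (hg n x.1).trans (Finset.sum_eq_zero fun m _ => by
        rw [hst (m, n) (Or.inr hn), zero_mul])) x.2
  calc b x = ∑ k ∈ s ×ˢ t, fCoeff b k * character k x := by
        simp only [hslice, hg, Finset.sum_mul, Finset.sum_product_right, character_eq_mul,
          mul_assoc]
    _ = ∑ k ∈ S, fCoeff b k * character k x :=
      (Finset.sum_subset Finset.subset_product fun k _ hk => by rw [hS k hk, zero_mul]).symm

theorem finite_knorm_le (μ : ℝ) : {k : Z2 | knorm k ≤ μ}.Finite := by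
  refine (Set.finite_Icc ((-⌈μ⌉, -⌈μ⌉) : Z2) (⌈μ⌉, ⌈μ⌉)).subset fun k hk => ?_
  have hcoord : ∀ n : ℤ, (n : ℝ) ^ 2 ≤ (k.1 : ℝ) ^ 2 + (k.2 : ℝ) ^ 2 → |n| ≤ ⌈μ⌉ := fun n hn => by
    have hle : ((|n| : ℤ) : ℝ) ≤ ⌈μ⌉ := by
      rw [Int.cast_abs]
      exact (Real.abs_le_sqrt hn).trans (hk.trans (Int.le_ceil μ))
    exact_mod_cast hle
  have h1 := abs_le.1 (hcoord k.1 (by linarith [sq_nonneg (k.2 : ℝ)]))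
  have h2 := abs_le.1 (hcoord k.2 (by linarith [sq_nonneg (k.1 : ℝ)]))
  exact ⟨⟨h1.1, h2.1⟩, ⟨h1.2, h2.2⟩⟩

variable {S : Finset Z2}

theorem Tmult_eq_sum (m : Z2 → ℂ) (hS : ∀ k ∉ S, fCoeff b k = 0) (x : ℝ × ℝ) :
    Tmult m b x = ∑ k ∈ S, m k * fCoeff b k * character k x :=
  tsum_eq_sum fun k hk => by rw [hS k hk, mul_zero, zero_mul]

theorem Tbil_eq_sum (K : (ℝ × ℝ) × (ℝ × ℝ) → ℂ) (hS : ∀ k ∉ S, fCoeff b k = 0) (x : ℝ × ℝ) :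
    Tbil K b b x = ∑ p ∈ S ×ˢ S, mOf K (toR p.1) (toR p.2) * fCoeff b p.1 * fCoeff b p.2 *
      character (p.1 + p.2) x := by
  let a : Z2 → Z2 → ℂ := fun k j => mOf K (toR k) (toR j) * fCoeff b k * fCoeff b j
  have hconv : ∀ k, ∑' j, a j (k - j) = ∑ j ∈ S, a j (k - j) := fun k =>
    tsum_eq_sum fun j hj => by simp only [a, hS j hj, mul_zero, zero_mul]
  have hshift : ∀ j, HasSum (fun k => a j (k - j) * character k x)
      (∑ k ∈ S, a j k * character (j + k) x) := fun j => by
    rw [← (Equiv.addLeft j).hasSum_iff]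
    simp only [Function.comp_def, Equiv.coe_addLeft, add_sub_cancel_left]
    exact hasSum_sum_of_ne_finset_zero fun k hk => by simp only [a, hS k hk, mul_zero, zero_mul]
  calc Tbil K b b x = ∑' k, ∑ j ∈ S, a j (k - j) * character k x :=
        tsum_congr fun k => by rw [← Finset.sum_mul, ← hconv]; rfl
    _ = ∑ j ∈ S, ∑ k ∈ S, a j k * character (j + k) x := (hasSum_sum fun j _ => hshift j).tsum_eq
    _ = _ := (Finset.sum_product' S S fun j k => a j k * character (j + k) x).symm

/-- The `j`-th coordinate functional of the plane. -/
def coord (j : Fin 2) : Plane →L[ℝ] ℝ := if j = 0 then WithLp.fstL 2 ℝ ℝ ℝ else WithLp.sndL 2 ℝ ℝ ℝ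

/-- The symbol of the partial derivative `∂_j`. -/
def derivSymbol (j : Fin 2) (k : Z2) : ℂ := I * (coord j (WithLp.toLp 2 (toR k)) : ℝ)

theorem hasFDerivAt_character (k : Z2) (x : ℝ × ℝ) :
    HasFDerivAt (character k)
      (character k x • I • ofRealCLM.comp ((k.1 : ℝ) • ContinuousLinearMap.fst ℝ ℝ ℝ +
        (k.2 : ℝ) • ContinuousLinearMap.snd ℝ ℝ ℝ)) x := by
  let L : ℝ × ℝ →L[ℝ] ℂ := I • ofRealCLM.comp
    ((k.1 : ℝ) • ContinuousLinearMap.fst ℝ ℝ ℝ + (k.2 : ℝ) • ContinuousLinearMap.snd ℝ ℝ ℝ)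
  have hL : character k = fun y => exp (L y) := by
    ext y
    simp [character, L, dotZ, mul_add]
  rw [hL]
  exact L.hasFDerivAt.cexp

theorem pd_sum_character {ι : Type*} (s : Finset ι) (a : ι → ℂ) (k : ι → Z2) (j : Fin 2)
    (x : ℝ × ℝ) :
    pd j (fun y => ∑ i ∈ s, a i * character (k i) y) x =
      ∑ i ∈ s, derivSymbol j (k i) * a i * character (k i) x := by
  have hderiv := HasFDerivAt.fun_sum (u := s) fun i _ =>
    (hasFDerivAt_character (k i) x).const_mul (a i)
  rw [pd, dirD, hderiv.fderiv, sum_apply]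
  refine Finset.sum_congr rfl fun i _ => ?_
  rw [mul_comm (derivSymbol j (k i)), mul_assoc]
  fin_cases j <;> simp [derivSymbol, coord, toR, mul_comm]

theorem eq_Tmult_one (hb : Continuous b) (hper : Periodic2 b) (hS : ∀ k ∉ S, fCoeff b k = 0) :
    b = Tmult 1 b := by
  ext x
  simpa [Tmult_eq_sum 1 hS] using eq_sum_fCoeff hb hper hS x

theorem pd_eq_Tmult (hb : Continuous b) (hper : Periodic2 b) (hS : ∀ k ∉ S, fCoeff b k = 0)
    (j : Fin 2) : pd j b = Tmult (derivSymbol j) b := by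
  ext x
  rw [Tmult_eq_sum _ hS, ← pd_sum_character, ← funext (eq_sum_fCoeff hb hper hS)]

theorem pd_Tbil (K : (ℝ × ℝ) × (ℝ × ℝ) → ℂ) (hS : ∀ k ∉ S, fCoeff b k = 0) (j : Fin 2)
    (x : ℝ × ℝ) :
    pd j (Tbil K b b) x = ∑ p ∈ S ×ˢ S, derivSymbol j (p.1 + p.2) *
      (mOf K (toR p.1) (toR p.2) * fCoeff b p.1 * fCoeff b p.2) * character (p.1 + p.2) x := by
  rw [funext (Tbil_eq_sum K hS), pd_sum_character]

theorem derivSymbol_mul_add_derivSymbol_mul (K : Fin 2 → (ℝ × ℝ) × (ℝ × ℝ) → ℂ) (k j : Z2) :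
    derivSymbol 0 (k + j) * mOf (K 0) (toR k) (toR j) +
      derivSymbol 1 (k + j) * mOf (K 1) (toR k) (toR j) = I * divSymbol K (toR k) (toR j) := by
  simp only [derivSymbol, coord, divSymbol, toR, Prod.fst_add, Prod.snd_add, Prod.mk_add_mk,
    Int.cast_add, ofReal_add, ofReal_intCast, ↓reduceIte, one_ne_zero, WithLp.fstL_apply,
    WithLp.sndL_apply, WithLp.toLp_fst, WithLp.toLp_snd]
  ring

theorem sum_product_self_congr_of_swap {ι : Type*} (s : Finset ι) (f g : ι × ι → ℂ)
    (h : ∀ p ∈ s ×ˢ s, f p + f p.swap = g p + g p.swap) :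
    ∑ p ∈ s ×ˢ s, f p = ∑ p ∈ s ×ˢ s, g p := by
  have hswap : ∀ F : ι × ι → ℂ, ∑ p ∈ s ×ˢ s, F p.swap = ∑ p ∈ s ×ˢ s, F p := fun F =>
    (Finset.sum_product_right s s _).trans (Finset.sum_product s s _).symm
  have := Finset.sum_congr rfl h
  simp only [Finset.sum_add_distrib, hswap, ← two_mul] at this
  exact mul_left_cancel₀ two_ne_zero this

theorem Tmult_mul_Tmult_eq {u v : Z2 → ℂ} {r : ℂ} {K : Fin 2 → (ℝ × ℝ) × (ℝ × ℝ) → ℂ}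
    (hS : ∀ k ∉ S, fCoeff b k = 0)
    (huv : ∀ k j, fCoeff b k ≠ 0 → fCoeff b j ≠ 0 → u k * v j + u j * v k =
      r * I * (divSymbol K (toR k) (toR j) + divSymbol K (toR j) (toR k))) (x : ℝ × ℝ) :
    Tmult u b x * Tmult v b x =
      r * (pd 0 (Tbil (K 0) b b) x + pd 1 (Tbil (K 1) b b) x) := by
  have hprod : Tmult u b x * Tmult v b x = ∑ p ∈ S ×ˢ S,
      u p.1 * v p.2 * (fCoeff b p.1 * fCoeff b p.2 * character (p.1 + p.2) x) := by
    rw [Tmult_eq_sum u hS, Tmult_eq_sum v hS, Finset.sum_mul_sum, ← Finset.sum_product']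
    refine Finset.sum_congr rfl fun p _ => ?_
    rw [character_add]
    ring
  have hdiv : r * (pd 0 (Tbil (K 0) b b) x + pd 1 (Tbil (K 1) b b) x) = ∑ p ∈ S ×ˢ S,
      r * I * divSymbol K (toR p.1) (toR p.2) *
        (fCoeff b p.1 * fCoeff b p.2 * character (p.1 + p.2) x) := by
    rw [pd_Tbil _ hS, pd_Tbil _ hS, ← Finset.sum_add_distrib, Finset.mul_sum]
    refine Finset.sum_congr rfl fun p _ => ?_
    rw [mul_assoc r, ← derivSymbol_mul_add_derivSymbol_mul]
    ring
  rw [hprod, hdiv]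
  refine sum_product_self_congr_of_swap S _ _ fun ⟨k, j⟩ _ => ?_
  by_cases hkj : fCoeff b k = 0 ∨ fCoeff b j = 0
  · rcases hkj with h | h <;> simp [h]
  · obtain ⟨hk, hj⟩ := not_or.1 hkj
    simp only [Prod.swap, add_comm j k]
    linear_combination (fCoeff b k * fCoeff b j * character (k + j) x) * huv k j hk hj

end FourierSeries

section BilinearIdentities

theorem knorm_eq_norm (k : Z2) : knorm k = ‖WithLp.toLp 2 (toR k)‖ := by
  rw [WithLp.prod_norm_eq_of_L2]
  simp [knorm, toR]

variable {l : ℝ × ℝ} {lam μ : ℝ} {κ k : Z2}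

theorem norm_toLp_eq_one (hl : l.1 ^ 2 + l.2 ^ 2 = 1) : ‖WithLp.toLp 2 l‖ = 1 := by
  rw [WithLp.prod_norm_eq_of_L2]
  simp [hl]

theorem div_smul_rescale (hμ : 0 < μ) (ξ : ℝ × ℝ) :
    (μ / lam) • rescale μ ξ = lam⁻¹ • WithLp.toLp 2 ξ := by
  rw [rescale, smul_smul, div_mul_eq_mul_div, mul_inv_cancel₀ hμ.ne', one_div]

theorem norm_div_smul_rescale_lt_one (hμ : 0 < μ) (hk : knorm k < lam) :
    ‖(μ / lam) • rescale μ (toR k)‖ < 1 := by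
  have hlam : 0 < lam := (Real.sqrt_nonneg _).trans_lt hk
  rw [div_smul_rescale hμ, norm_smul, norm_inv, Real.norm_of_nonneg hlam.le, ← knorm_eq_norm,
    inv_mul_lt_one₀ hlam]
  exact hk

theorem knorm_add_eq (hlam : 0 < lam) (hμ : 0 < μ) (hκ : toR κ = lam • l) (k : Z2) :
    knorm (κ + k) = lam * ‖WithLp.toLp 2 l + (μ / lam) • rescale μ (toR k)‖ := by
  have hadd : toR (κ + k) = toR κ + toR k := by simp [toR]
  rw [knorm_eq_norm, hadd, hκ, div_smul_rescale hμ, ← Real.norm_of_nonneg hlam.le, ← norm_smul,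
    Real.norm_of_nonneg hlam.le, smul_add, smul_inv_smul₀ hlam.ne', WithLp.toLp_add,
    WithLp.toLp_smul]

theorem knorm_sub_eq (hlam : 0 < lam) (hμ : 0 < μ) (hκ : toR κ = lam • l) (k : Z2) :
    knorm (κ - k) = lam * ‖WithLp.toLp 2 l - (μ / lam) • rescale μ (toR k)‖ := by
  have hneg : rescale μ (toR (-k)) = -rescale μ (toR k) := by
    rw [rescale, rescale, ← smul_neg, ← WithLp.toLp_neg]
    simp [toR]
  rw [sub_eq_add_neg, knorm_add_eq hlam hμ hκ, hneg, smul_neg, ← sub_eq_add_neg]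

theorem mul_inner_rescale (hμ : 0 < μ) (l : ℝ × ℝ) (k : Z2) :
    μ * inner ℝ (WithLp.toLp 2 l) (rescale μ (toR k)) = l.1 * k.1 + l.2 * k.2 := by
  rw [rescale, real_inner_smul_right, mul_inv_cancel_left₀ hμ.ne', WithLp.prod_inner_apply]
  simp [toR, mul_comm]

theorem half_knorm_add_add_knorm_sub (hl : l.1 ^ 2 + l.2 ^ 2 = 1) (hμ : 0 < μ)
    (hκ : toR κ = lam • l) (hk : knorm k < lam) :
    (knorm (κ + k) + knorm (κ - k)) / 2 - lam =
      μ ^ 2 / lam * evenSymbol ((WithLp.toLp 2 l, μ / lam), rescale μ (toR k)) := by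
  have hlam : 0 < lam := (Real.sqrt_nonneg _).trans_lt hk
  rw [knorm_add_eq hlam hμ hκ, knorm_sub_eq hlam hμ hκ]
  have h := half_norm_add_add_norm_sub (norm_toLp_eq_one hl) (norm_div_smul_rescale_lt_one hμ hk)
  have hsq : lam * (μ / lam) ^ 2 = μ ^ 2 / lam := by field_simp
  linear_combination lam * h + evenSymbol ((WithLp.toLp 2 l, μ / lam), rescale μ (toR k)) * hsq

theorem half_knorm_add_sub_knorm_sub (hl : l.1 ^ 2 + l.2 ^ 2 = 1) (hμ : 0 < μ)
    (hκ : toR κ = lam • l) (hk : knorm k < lam) :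
    (knorm (κ + k) - knorm (κ - k)) / 2 - (l.1 * k.1 + l.2 * k.2) =
      μ ^ 3 / lam ^ 2 * oddSymbol ((WithLp.toLp 2 l, μ / lam), rescale μ (toR k)) := by
  have hlam : 0 < lam := (Real.sqrt_nonneg _).trans_lt hk
  rw [knorm_add_eq hlam hμ hκ, knorm_sub_eq hlam hμ hκ, ← mul_inner_rescale hμ]
  have h := half_norm_add_sub_norm_sub (norm_toLp_eq_one hl) (norm_div_smul_rescale_lt_one hμ hk)
  have hcube : lam * (μ / lam) ^ 3 = μ ^ 3 / lam ^ 2 := by field_simp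
  have hlin : lam * (μ / lam) = μ := by field_simp
  linear_combination lam * h + oddSymbol ((WithLp.toLp 2 l, μ / lam), rescale μ (toR k)) * hcube
    + inner ℝ (WithLp.toLp 2 l) (rescale μ (toR k)) * hlin

theorem derivSymbol_eq_rescale (hμ : 0 < μ) (j : Fin 2) (k : Z2) :
    derivSymbol j k = I * (μ * coord j (rescale μ (toR k)) : ℝ) := by
  rw [derivSymbol, rescale, map_smul, smul_eq_mul, mul_inv_cancel_left₀ hμ.ne']

variable {b : ℝ × ℝ → ℂ} {K : Fin 2 → (ℝ × ℝ) × (ℝ × ℝ) → ℂ}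

theorem exists_finset_fCoeff_eq_zero (hsupp : ∀ k : Z2, μ < knorm k → fCoeff b k = 0) :
    ∃ S : Finset Z2, ∀ k ∉ S, fCoeff b k = 0 :=
  ⟨(finite_knorm_le μ).toFinset, fun k hk => hsupp k (by simpa using hk)⟩

theorem mul_T2op_eq (hl : l.1 ^ 2 + l.2 ^ 2 = 1) (hμ : 0 < μ) (hμlam : μ < lam)
    (hκ : toR κ = lam • l) (hb : Continuous b) (hper : Periodic2 b)
    (hsupp : ∀ k : Z2, μ < knorm k → fCoeff b k = 0)
    (hK : ∀ ξ η, e2 ξ ≤ μ → e2 η ≤ μ → divSymbol K ξ η =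
      μ * ((oddSymbol ((WithLp.toLp 2 l, μ / lam), rescale μ ξ) +
        oddSymbol ((WithLp.toLp 2 l, μ / lam), rescale μ η)) / 2 : ℝ)) (x : ℝ × ℝ) :
    b x * T2op κ l b x = ((μ ^ 2 / lam ^ 2 : ℝ) : ℂ) *
      (pd 0 (Tbil (K 0) b b) x + pd 1 (Tbil (K 1) b b) x) := by
  obtain ⟨S, hS⟩ := exists_finset_fCoeff_eq_zero hsupp
  have hball : ∀ k, fCoeff b k ≠ 0 → e2 (toR k) ≤ μ := fun k hk => not_lt.1 (mt (hsupp k) hk)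
  have hsymbol := fun k hk => half_knorm_add_sub_knorm_sub hl hμ hκ
    ((hball k hk).trans_lt hμlam)
  conv_lhs => rw [congrFun (eq_Tmult_one hb hper hS) x]
  refine Tmult_mul_Tmult_eq hS (fun k j hk hj => ?_) x
  rw [hK _ _ (hball k hk) (hball j hj), hK _ _ (hball j hj) (hball k hk), hsymbol k hk,
    hsymbol j hj]
  push_cast [Pi.one_apply]
  ring

theorem T1op_mul_pd_eq (hl : l.1 ^ 2 + l.2 ^ 2 = 1) (hμ : 0 < μ) (hμlam : μ < lam)
    (hκ : toR κ = lam • l) (hb : Continuous b) (hper : Periodic2 b)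
    (hsupp : ∀ k : Z2, μ < knorm k → fCoeff b k = 0) (i : Fin 2)
    (hK : ∀ ξ η, e2 ξ ≤ μ → e2 η ≤ μ → divSymbol K ξ η =
      μ * ((evenSymbol ((WithLp.toLp 2 l, μ / lam), rescale μ ξ) * coord i (rescale μ η) +
        evenSymbol ((WithLp.toLp 2 l, μ / lam), rescale μ η) * coord i (rescale μ ξ)) / 2 : ℝ))
    (x : ℝ × ℝ) :
    T1op κ lam b x * pd i b x = ((μ ^ 2 / lam : ℝ) : ℂ) *
      (pd 0 (Tbil (K 0) b b) x + pd 1 (Tbil (K 1) b b) x) := by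
  obtain ⟨S, hS⟩ := exists_finset_fCoeff_eq_zero hsupp
  have hball : ∀ k, fCoeff b k ≠ 0 → e2 (toR k) ≤ μ := fun k hk => not_lt.1 (mt (hsupp k) hk)
  have hsymbol := fun k hk => half_knorm_add_add_knorm_sub hl hμ hκ
    ((hball k hk).trans_lt hμlam)
  rw [pd_eq_Tmult hb hper hS]
  refine Tmult_mul_Tmult_eq hS (fun k j hk hj => ?_) x
  rw [hK _ _ (hball k hk) (hball j hj), hK _ _ (hball j hj) (hball k hk), hsymbol k hk,
    hsymbol j hj, derivSymbol_eq_rescale hμ, derivSymbol_eq_rescale hμ]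
  push_cast
  ring

theorem toLp_div_mem_parameterSet {ρ : ℝ} (hl : l.1 ^ 2 + l.2 ^ 2 = 1) (hlam : 0 < lam)
    (hμ : 0 < μ) (hμρ : μ ≤ ρ * lam) : (WithLp.toLp 2 l, μ / lam) ∈ parameterSet ρ :=
  ⟨mem_sphere_zero_iff_norm.2 (norm_toLp_eq_one hl), by positivity, (div_le_iff₀ hlam).2 hμρ⟩

end BilinearIdentities

theorem stmt13_general {ρ : ℝ} (hρ : ρ < 1) : ∃ C : ℝ, ∀ (l : ℝ × ℝ) (lam μ : ℝ) (κ : Z2),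
    l.1 ^ 2 + l.2 ^ 2 = 1 → 0 < lam → (κ.1 : ℝ) = lam * l.1 → (κ.2 : ℝ) = lam * l.2 →
    0 < μ → μ ≤ ρ * lam →
    ∃ K : Fin 6 → ((ℝ × ℝ) × (ℝ × ℝ)) → ℂ,
      (∀ i, Integrable (K i) ∧ (∫ z : (ℝ × ℝ) × (ℝ × ℝ), ‖K i z‖) ≤ C) ∧
      ∀ b₀ : ℝ × ℝ → ℂ, Continuous b₀ → Periodic2 b₀ →
        (∀ k : Z2, μ < knorm k → fCoeff b₀ k = 0) →
        (∀ x, b₀ x * T2op κ l b₀ x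
            = ((μ ^ 2 / lam ^ 2 : ℝ) : ℂ)
                * (pd 0 (Tbil (K 0) b₀ b₀) x + pd 1 (Tbil (K 1) b₀ b₀) x)) ∧
        (∀ x, T1op κ lam b₀ x * pd 0 b₀ x
            = ((μ ^ 2 / lam : ℝ) : ℂ)
                * (pd 0 (Tbil (K 2) b₀ b₀) x + pd 1 (Tbil (K 3) b₀ b₀) x)) ∧
        (∀ x, T1op κ lam b₀ x * pd 1 b₀ x
            = ((μ ^ 2 / lam : ℝ) : ℂ)
                * (pd 0 (Tbil (K 4) b₀ b₀) x + pd 1 (Tbil (K 5) b₀ b₀) x)) := by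
  obtain ⟨C, hC⟩ := hasUniformDivKernels_oddSymbol hρ
  choose D hD using fun i => hasUniformDivKernels_evenSymbol_mul hρ (coord i)
  refine ⟨max C (max (D 0) (D 1)), fun l lam μ κ hl hlam hκ1 hκ2 hμ hμρ => ?_⟩
  have hθ := toLp_div_mem_parameterSet hl hlam hμ hμρ
  have hμlam : μ < lam := hμρ.trans_lt (mul_lt_of_lt_one_left hlam hρ)
  obtain ⟨K, hKC, hK⟩ := hC _ hθ μ hμ
  choose L hLD hL using fun i => hD i _ hθ μ hμ
  refine ⟨![K 0, K 1, L 0 0, L 0 1, L 1 0, L 1 1], ?_, fun b₀ hb hper hsupp => ⟨?_, ?_, ?_⟩⟩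
  · intro i
    fin_cases i <;> simp [hKC, hLD]
  · exact mul_T2op_eq hl hμ hμlam (Prod.ext hκ1 hκ2) hb hper hsupp hK
  · exact T1op_mul_pd_eq hl hμ hμlam (Prod.ext hκ1 hκ2) hb hper hsupp 0 (hL 0)
  · exact T1op_mul_pd_eq hl hμ hμlam (Prod.ext hκ1 hκ2) hb hper hsupp 1 (hL 1)

/-- Lemma A.3: for `|l| = 1`, `λl ∈ ℤ²`, `0 < μ ≤ λ/2` and `b₀` real with
Fourier support in `{|k| ≤ μ}`, there are kernels `K₁,…,K₆ ∈ L¹(ℝ²×ℝ²)` with `‖K_i‖₁ ≤ C` and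
`b₀ T²_{λl}b₀ = (μ²/λ²) ∑_{i=1,2} ∂_{x_i} T_{m_i}(b₀,b₀)`,
`(T¹_{λl}b₀) ∂_{x₁} b₀ = (μ²/λ) ∑ ∂_{x_i} T_{m_{i+2}}(b₀,b₀)`,
`(T¹_{λl}b₀) ∂_{x₂} b₀ = (μ²/λ) ∑ ∂_{x_i} T_{m_{i+4}}(b₀,b₀)`. -/
theorem stmt13 : ∃ C : ℝ, ∀ (l : ℝ × ℝ) (lam μ : ℝ) (κ : Z2) (b₀ : ℝ × ℝ → ℂ),
    l.1 ^ 2 + l.2 ^ 2 = 1 → 0 < lam → (κ.1 : ℝ) = lam * l.1 → (κ.2 : ℝ) = lam * l.2 →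
    0 < μ → μ ≤ lam / 2 →
    ContDiff ℝ (⊤ : ℕ∞) b₀ → Periodic2 b₀ → RealValued b₀ →
    (∀ k : Z2, μ < knorm k → fCoeff b₀ k = 0) →
    ∃ K : Fin 6 → ((ℝ × ℝ) × (ℝ × ℝ)) → ℂ,
      (∀ i, Integrable (K i) ∧ (∫ z : (ℝ × ℝ) × (ℝ × ℝ), ‖K i z‖) ≤ C) ∧
      (∀ x, b₀ x * T2op κ l b₀ x
          = ((μ ^ 2 / lam ^ 2 : ℝ) : ℂ)
              * (pd 0 (Tbil (K 0) b₀ b₀) x + pd 1 (Tbil (K 1) b₀ b₀) x)) ∧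
      (∀ x, T1op κ lam b₀ x * pd 0 b₀ x
          = ((μ ^ 2 / lam : ℝ) : ℂ)
              * (pd 0 (Tbil (K 2) b₀ b₀) x + pd 1 (Tbil (K 3) b₀ b₀) x)) ∧
      (∀ x, T1op κ lam b₀ x * pd 1 b₀ x
          = ((μ ^ 2 / lam : ℝ) : ℂ)
              * (pd 0 (Tbil (K 4) b₀ b₀) x + pd 1 (Tbil (K 5) b₀ b₀) x)) := by
  obtain ⟨C, hC⟩ := stmt13_general one_half_lt_one
  refine ⟨C, fun l lam μ κ b₀ hl hlam hκ1 hκ2 hμ hμlam hb hper _ hsupp => ?_⟩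
  obtain ⟨K, hKC, hK⟩ := hC l lam μ κ hl hlam hκ1 hκ2 hμ (by linarith)
  exact ⟨K, hKC, hK b₀ hb.continuous hper hsupp⟩

end
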